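/- There is an absolute constant C > 0 such that the following holds. Let n ≥ 2 be an integer, ε ∈ (0, 1/2), λ = 2·ln(1/ε) with λ ≤ n·ln(10/9), and R = ⌊log₂(ln(10/9)·n/λ)⌋. Let X ⊂ [−1,1]∖{0} be a finite set with positive weights (a_x)_{x∈X}, let B_0, …, B_{R+1} be the buckets of X with bucket weights w_0, …, w_{R+1}, and let H = V_X D_X V_X^T ∈ ℝ^{n×n}. Then there exists a Hankel matrix Ĥ ∈ ℝ^{n×n} of rank at most C·(ln n)·ln(1/ε) such that ‖H − Ĥ‖₂ ≤ ε · max_{0≤r≤R+1} w_r · n/2^r, and ‖H − Ĥ‖_F ≤ ε · ( √( Σ_{r₁=0}^{R} Σ_{r₂=0}^{R} w_{r₁} w_{r₂} · (n/2^{max(r₁,r₂)})² ) + w_{R+1} ). -/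

import Mathlib

open scoped BigOperators

/-- A matrix is Hankel if its entries depend only on the sum of the indices. -/
def IsHankel {n : ℕ} (A : Matrix (Fin n) (Fin n) ℝ) : Prop :=
  ∀ i j k l : Fin n, (i : ℕ) + (j : ℕ) = (k : ℕ) + (l : ℕ) → A i j = A k l

/-- Euclidean (ℓ₂) norm of a vector. -/
noncomputable def euclNorm {n : ℕ} (x : Fin n → ℝ) : ℝ := Real.sqrt (∑ i, x i ^ 2)

/-- Spectral norm of a matrix: supremum of ‖Ax‖₂ over the Euclidean unit ball. -/
noncomputable def specNorm {n : ℕ} (A : Matrix (Fin n) (Fin n) ℝ) : ℝ :=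
  ⨆ x : {x : Fin n → ℝ // euclNorm x ≤ 1}, euclNorm (A.mulVec x.1)

/-- Frobenius norm of a matrix. -/
noncomputable def froNorm {n : ℕ} (A : Matrix (Fin n) (Fin n) ℝ) : ℝ :=
  Real.sqrt (∑ i, ∑ j, (A i j) ^ 2)

/-- The Vandermonde matrix `V_X ∈ ℝ^{n×|X|}` whose columns are the moment vectors
`v_n(x) = (1, x, …, x^{n−1})ᵀ` for `x ∈ X`. -/
noncomputable def vandermondeX (n : ℕ) (X : Finset ℝ) : Matrix (Fin n) X ℝ :=
  Matrix.of fun (i : Fin n) (x : X) => (x : ℝ) ^ (i : ℕ)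

/-- The product `V_X D_X V_Xᵀ` where `D_X = diag((a_x)_{x∈X})`. -/
noncomputable def vdvT (n : ℕ) (X : Finset ℝ) (a : ℝ → ℝ) : Matrix (Fin n) (Fin n) ℝ :=
  vandermondeX n X * Matrix.diagonal (fun x : X => a (x : ℝ)) * (vandermondeX n X).transpose


open scoped Classical

/-- Log-scale bucketing of a set of nodes `X ⊂ [−1,1]∖{0}`:
`B₀ = {x : ln(1/|x|) ∈ [0, λ/n]}`, `B_r = {x : ln(1/|x|) ∈ (2^{r−1}λ/n, 2^r λ/n]}` for
`1 ≤ r ≤ R`, and `B_{R+1} = {x : ln(1/|x|) > 2^R λ/n}`. -/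
noncomputable def bucket (X : Finset ℝ) (lam : ℝ) (n R r : ℕ) : Finset ℝ :=
  if r = 0 then
    X.filter (fun x => 0 ≤ Real.log (1 / |x|) ∧ Real.log (1 / |x|) ≤ lam / n)
  else if r ≤ R then
    X.filter (fun x =>
      (2 : ℝ) ^ (r - 1) * lam / n < Real.log (1 / |x|) ∧
        Real.log (1 / |x|) ≤ (2 : ℝ) ^ r * lam / n)
  else
    X.filter (fun x => (2 : ℝ) ^ R * lam / n < Real.log (1 / |x|))

lemma carath {ι : Type} [Fintype ι] (S : Finset ℝ) (a : ℝ → ℝ) (ha : ∀ x ∈ S, 0 < a x)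
    (φ : ι → ℝ → ℝ) :
    ∃ (m : ℕ) (y : Fin m → ℝ) (b : Fin m → ℝ), m ≤ Fintype.card ι + 1 ∧ (∀ k, y k ∈ S) ∧
      (∀ k, 0 ≤ b k) ∧ (∑ k, b k = ∑ x ∈ S, a x) ∧
      ∀ i, ∑ k, b k * φ i (y k) = ∑ x ∈ S, a x * φ i x := by
  rcases S.eq_empty_or_nonempty with rfl | hS
  · exact ⟨0, Fin.elim0, Fin.elim0, by omega, fun k => k.elim0, fun k => k.elim0, by simp,
      by simp⟩
  set W := ∑ x ∈ S, a x with hW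
  have hWpos : 0 < W := Finset.sum_pos ha hS
  let Φ : ℝ → (ι → ℝ) := fun x i => φ i x
  have hmem : ∑ x ∈ S, (a x / W) • Φ x ∈ convexHull ℝ (Φ '' (S : Set ℝ)) := by
    apply (convex_convexHull ℝ _).sum_mem
    · intro x hx; exact (div_pos (ha x hx) hWpos).le
    · rw [← Finset.sum_div]; exact div_self hWpos.ne'
    · intro x hx; exact subset_convexHull _ _ ⟨x, hx, rfl⟩
  obtain ⟨κ, hκ, z, w, hz, haff, hw, hw1, hsum⟩ := eq_pos_convex_span_of_mem_convexHull hmem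
  have hcard : Fintype.card κ ≤ Fintype.card ι + 1 := by
    have h := haff.card_le_finrank_succ
    have h2 := Submodule.finrank_le (vectorSpan ℝ (Set.range z))
    rw [Module.finrank_fintype_fun_eq_card] at h2
    omega
  have hz' : ∀ k, ∃ x ∈ S, Φ x = z k := fun k => by
    obtain ⟨x, hx, h⟩ := hz ⟨k, rfl⟩
    exact ⟨x, hx, h⟩
  choose y hy hyz using hz'
  let e := (Fintype.equivFin κ).symm
  refine ⟨Fintype.card κ, fun k => y (e k), fun k => W * w (e k), hcard, fun k => hy _,
    fun k => (mul_pos hWpos (hw _)).le, ?_, ?_⟩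
  · rw [e.sum_comp (fun k => W * w k), ← Finset.mul_sum, hw1, mul_one]
  · intro i
    rw [e.sum_comp (fun k => W * w k * φ i (y k))]
    have h := congrFun hsum i
    simp only [Finset.sum_apply, Pi.smul_apply, smul_eq_mul] at h
    have h3 : ∀ k, φ i (y k) = z k i := fun k => congrFun (hyz k) i
    simp only [h3, mul_assoc]
    rw [← Finset.mul_sum, h, Finset.mul_sum]
    apply Finset.sum_congr rfl
    intro x hx
    simp only [Φ]
    field_simp

lemma exp_taylor (Y y : ℝ) (hy : 0 ≤ y) (hyY : y ≤ Y) (D : ℕ) (hD : 5 * Y ≤ D) :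
    |Real.exp (-y) - ∑ k ∈ Finset.range D, (-y) ^ k / (k.factorial : ℝ)| ≤ Real.exp (-Y) := by
  have h2 : |Real.exp (-y) - ∑ k ∈ Finset.range D, (-y) ^ k / (k.factorial : ℝ)|
      ≤ Real.exp (8 * y) * (1/8)^D := by
    have h := Complex.norm_exp_sub_sum_le_exp_norm_sub_sum (((-y : ℝ)) : ℂ) D
    have e : Complex.exp (((-y : ℝ)) : ℂ) - ∑ m ∈ Finset.range D, (((-y : ℝ)) : ℂ) ^ m / (m.factorial : ℂ)
      = ((Real.exp (-y) - ∑ k ∈ Finset.range D, (-y) ^ k / (k.factorial : ℝ) : ℝ) : ℂ) := by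
      push_cast; rfl
    rw [e, Complex.norm_real, Complex.norm_real, Real.norm_eq_abs, Real.norm_eq_abs, abs_neg,
      abs_of_nonneg hy] at h
    refine h.trans ?_
    have hs : ∀ z : ℝ, HasSum (fun m : ℕ => z ^ m / (m.factorial : ℝ)) (Real.exp z) := fun z => by
      rw [Real.exp_eq_exp_ℝ]; exact NormedSpace.expSeries_div_hasSum_exp z
    have ha := (hasSum_nat_add_iff' D).mpr (hs y)
    have hb := ((hasSum_nat_add_iff' D).mpr (hs (8 * y))).mul_right ((1/8 : ℝ)^D)
    have hc := hasSum_le (fun m => ?_) ha hb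
    · refine hc.trans ?_
      gcongr
      have : 0 ≤ ∑ i ∈ Finset.range D, (8 * y) ^ i / (i.factorial : ℝ) := by positivity
      linarith
    · have : (8 * y) ^ (m + D) / ((m + D).factorial : ℝ) * (1/8)^D
          = 8 ^ m * (y ^ (m + D) / ((m + D).factorial : ℝ)) := by
        rw [mul_pow, pow_add 8]
        have : (8:ℝ)^D * (1/8)^D = 1 := by rw [← mul_pow]; norm_num
        linear_combination 8 ^ m * (y ^ (m + D) / ((m + D).factorial : ℝ)) * this
      rw [this]
      have h8 : (1:ℝ) ≤ 8 ^ m := one_le_pow₀ (by norm_num)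
      exact le_mul_of_one_le_left (by positivity) h8
  refine h2.trans ?_
  have h3 : (1/8 : ℝ)^D ≤ Real.exp (-2 * D) := by
    have : (1/8:ℝ) ≤ Real.exp (-2) := by
      have e1 := Real.exp_one_lt_d9
      have e0 := Real.exp_pos 1
      have : Real.exp 2 ≤ 8 := by
        rw [show (2:ℝ) = 1 + 1 by norm_num, Real.exp_add]; nlinarith
      rw [Real.exp_neg, one_div]
      exact inv_anti₀ (Real.exp_pos _) this
    calc (1/8 : ℝ)^D ≤ (Real.exp (-2))^D := by gcongr
      _ = _ := by rw [← Real.exp_nat_mul]; ring_nf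
  calc Real.exp (8 * y) * (1/8)^D ≤ Real.exp (8*y) * Real.exp (-2 * D) := by gcongr
    _ = Real.exp (8 * y + -2 * D) := by rw [Real.exp_add]
    _ ≤ _ := by apply Real.exp_le_exp.mpr; linarith

lemma geo_exp (n : ℕ) (y : ℝ) (hy : 0 < y) (hy1 : y ≤ 1) :
    ∑ i : Fin n, Real.exp (-(y * (i : ℕ))) ≤ 2 / y := by
  have h : ∀ i : Fin n, Real.exp (-(y * (i : ℕ))) = (Real.exp (-y)) ^ (i : ℕ) := fun i => by
    rw [← Real.exp_nat_mul]; ring_nf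
  simp only [h]
  rw [Fin.sum_univ_eq_sum_range (fun i => Real.exp (-y) ^ i) n]
  have hlt : Real.exp (-y) < 1 := by rw [Real.exp_lt_one_iff]; linarith
  have h2 : y / 2 ≤ 1 - Real.exp (-y) := by
    have h3 : Real.exp (-y) ≤ 1 / (1 + y) := by
      rw [Real.exp_neg, ← one_div]
      apply one_div_le_one_div_of_le (by linarith)
      linarith [Real.add_one_le_exp y]
    have h4 : 1 / (1 + y) ≤ 1 - y / 2 := by
      rw [div_le_iff₀ (by linarith)]; nlinarith
    linarith
  have h5 : (∑ i ∈ Finset.range n, Real.exp (-y) ^ i) * (1 - Real.exp (-y)) ≤ 1 := by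
    rw [geom_sum_mul_neg]
    have := pow_pos (Real.exp_pos (-y)) n
    linarith
  rw [le_div_iff₀ hy]
  have h6 : 0 ≤ ∑ i ∈ Finset.range n, Real.exp (-y) ^ i := by positivity
  nlinarith
noncomputable def uu (n r i : ℕ) : ℝ := Real.exp (-((2:ℝ)^r / (3 * n) * i))

lemma uu_nonneg (n r i : ℕ) : 0 ≤ uu n r i := (Real.exp_pos _).le

lemma uu_gram (n r q : ℕ) (hn : 0 < n) (hr : (2:ℝ)^r ≤ n) (hq : (2:ℝ)^q ≤ n) :
    ∑ i : Fin n, uu n r i * uu n q i ≤ 6 * (n / 2 ^ (max r q)) := by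
  have hn' : (0:ℝ) < n := by exact_mod_cast hn
  have hm : (2:ℝ)^(max r q) ≤ n := by
    rcases max_choice r q with h | h <;> rw [h] <;> assumption
  have hpos : (0:ℝ) < 2 ^ (max r q) := by positivity
  have key := geo_exp n ((2:ℝ)^(max r q) / (3 * n)) (by positivity)
    (by rw [div_le_one (by positivity)]; linarith)
  calc _ ≤ _ := Finset.sum_le_sum fun i _ => ?_
    _ ≤ _ := key
    _ = _ := by field_simp; norm_num
  unfold uu
  rw [← Real.exp_add]
  apply Real.exp_le_exp.mpr
  have h : (2:ℝ)^(max r q) ≤ 2^r + 2^q := by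
    have : (0:ℝ) < 2^r := by positivity
    have : (0:ℝ) < 2^q := by positivity
    rcases max_choice r q with h | h <;> rw [h] <;> linarith
  have h2 : (2:ℝ)^(max r q) / (3 * n) * (i : ℕ) ≤ (2^r + 2^q) / (3 * n) * (i : ℕ) := by gcongr
  rw [add_div, add_mul] at h2
  linarith

/-- row sums -/
lemma rowsum (ρ : ℝ) (h0 : 0 ≤ ρ) (h1 : ρ ≤ 5 / 7) (r N : ℕ) :
    ∑ q ∈ Finset.range N, ρ ^ (max r q - min r q) ≤ 7 := by
  have geo : ∀ m : ℕ, ∑ q ∈ Finset.range m, ρ ^ q ≤ 7 / 2 := by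
    intro m
    have h5 : (∑ i ∈ Finset.range m, ρ ^ i) * (1 - ρ) ≤ 1 := by
      rw [geom_sum_mul_neg]
      have := pow_nonneg h0 m
      linarith
    have h6 : 0 ≤ ∑ i ∈ Finset.range m, ρ ^ i := by positivity
    nlinarith
  calc ∑ q ∈ Finset.range N, ρ ^ (max r q - min r q)
      ≤ ∑ q ∈ Finset.range (r + 1 + N), ρ ^ (max r q - min r q) :=
        Finset.sum_le_sum_of_subset_of_nonneg (Finset.range_subset_range.mpr (by omega))
          (fun _ _ _ => by positivity)
    _ = ∑ q ∈ Finset.range (r + 1), ρ ^ (max r q - min r q)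
        + ∑ q ∈ Finset.range N, ρ ^ (max r (r + 1 + q) - min r (r + 1 + q)) :=
        Finset.sum_range_add _ _ _
    _ ≤ 7 / 2 + 7 / 2 := by
        apply add_le_add
        · rw [← Finset.sum_range_reflect]
          refine le_trans (le_of_eq (Finset.sum_congr rfl fun q hq => ?_)) (geo (r + 1))
          rw [Finset.mem_range] at hq
          congr 1; omega
        · refine le_trans (Finset.sum_le_sum fun q hq => ?_) (geo N)
          apply pow_le_pow_of_le_one h0 (by linarith)
          omega
    _ = 7 := by norm_num

/-- Schur bound on the Gram form. -/
lemma gram_form (n N : ℕ) (hn : 0 < n) (hN : ∀ r < N, (2:ℝ)^r ≤ n) (d : ℕ → ℝ)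
    (hd : ∀ r, 0 ≤ d r) :
    ∑ i : Fin n, (∑ r ∈ Finset.range N, Real.sqrt (2^r / n) * d r * uu n r i) ^ 2
      ≤ 42 * ∑ r ∈ Finset.range N, d r ^ 2 := by
  have hn' : (0:ℝ) < n := by exact_mod_cast hn
  set ρ : ℝ := Real.sqrt (1/2) with hρ
  have hρ0 : 0 ≤ ρ := Real.sqrt_nonneg _
  have hρ2 : ρ ^ 2 = 1/2 := Real.sq_sqrt (by norm_num)
  have hρ1 : ρ ≤ 5/7 := by rw [hρ, Real.sqrt_le_iff]; norm_num
  have hG : ∀ r < N, ∀ q < N, Real.sqrt (2^r / n) * Real.sqrt (2^q / n) *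
      ∑ i : Fin n, uu n r i * uu n q i ≤ 6 * ρ ^ (max r q - min r q) := by
    intro r hr q hq
    have h1 := uu_gram n r q hn (hN r hr) (hN q hq)
    have h2 : Real.sqrt (2^r / n) * Real.sqrt (2^q / n) = ρ ^ (max r q - min r q) * (2 ^ (max r q) / n) := by
      rw [← Real.sqrt_mul (by positivity)]
      rw [Real.sqrt_eq_iff_eq_sq (by positivity) (by positivity)]
      rw [mul_pow, ← pow_mul, mul_comm _ 2, pow_mul, hρ2]
      clear h1
      wlog h : r ≤ q generalizing r q
      · have := this q hq r hr (by omega)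
        rw [max_comm, min_comm, mul_comm (2^r / (n:ℝ))]; exact this
      · obtain ⟨k, rfl⟩ := Nat.exists_eq_add_of_le h
        rw [max_eq_right h, min_eq_left h, Nat.add_sub_cancel_left]
        have : (1/2 : ℝ)^k * 2^k = 1 := by rw [← mul_pow]; norm_num
        rw [pow_add]
        field_simp
        linear_combination -this
    calc _ ≤ ρ ^ (max r q - min r q) * (2 ^ (max r q) / n) * (6 * (n / 2 ^ (max r q))) := by
          rw [h2]; gcongr
      _ = _ := by field_simp
  calc ∑ i : Fin n, (∑ r ∈ Finset.range N, Real.sqrt (2^r / n) * d r * uu n r i) ^ 2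
      = ∑ r ∈ Finset.range N, ∑ q ∈ Finset.range N, d r * d q * (Real.sqrt (2^r / n) * Real.sqrt (2^q / n) *
      ∑ i : Fin n, uu n r i * uu n q i) := by
        simp only [sq, Finset.sum_mul_sum]
        simp only [Finset.mul_sum]
        rw [Finset.sum_comm]
        refine Finset.sum_congr rfl fun r _ => ?_
        rw [Finset.sum_comm]
        refine Finset.sum_congr rfl fun q _ => Finset.sum_congr rfl fun i _ => ?_
        ring
    _ ≤ ∑ r ∈ Finset.range N, ∑ q ∈ Finset.range N,
          (3 * ρ ^ (max r q - min r q) * d r ^ 2 + 3 * ρ ^ (max r q - min r q) * d q ^ 2) := by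
        refine Finset.sum_le_sum fun r hr => Finset.sum_le_sum fun q hq => ?_
        have h := hG r (Finset.mem_range.mp hr) q (Finset.mem_range.mp hq)
        have hp : 0 ≤ ρ ^ (max r q - min r q) := by positivity
        calc _ ≤ d r * d q * (6 * ρ ^ (max r q - min r q)) := by
              have := hd r; have := hd q; gcongr
          _ ≤ _ := by nlinarith [mul_nonneg hp (sq_nonneg (d r - d q))]
    _ = ∑ r ∈ Finset.range N, 6 * d r ^ 2 * ∑ q ∈ Finset.range N, ρ ^ (max r q - min r q) := by
        simp only [Finset.sum_add_distrib]
        rw [Finset.sum_comm (f := fun r q => 3 * ρ ^ (max r q - min r q) * d q ^ 2)]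
        rw [← Finset.sum_add_distrib]
        refine Finset.sum_congr rfl fun r _ => ?_
        rw [← Finset.sum_add_distrib, Finset.mul_sum]
        refine Finset.sum_congr rfl fun q _ => ?_
        rw [max_comm q r, min_comm q r]; ring
    _ ≤ ∑ r ∈ Finset.range N, 6 * d r ^ 2 * 7 := by
        refine Finset.sum_le_sum fun r _ => ?_
        have := rowsum ρ hρ0 hρ1 r N
        gcongr
    _ = _ := by rw [Finset.mul_sum]; refine Finset.sum_congr rfl fun r _ => by ring

lemma spec_core (n N : ℕ) (hn : 0 < n) (hN : ∀ r < N, (2:ℝ)^r ≤ n) (α : ℕ → ℝ)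
    (E : Matrix (Fin n) (Fin n) ℝ)
    (hE : ∀ i j, |E i j| ≤ ∑ r ∈ Finset.range N, α r * (uu n r i * uu n r j)) (M : ℝ) (hM : 0 ≤ M)
    (hα : ∀ r < N, α r * n / 2^r ≤ M) : specNorm E ≤ 42 * M := by
  have hn' : (0:ℝ) < n := by exact_mod_cast hn
  apply Real.iSup_le _ (by positivity)
  rintro ⟨y, hy⟩
  simp only
  have hy2 : ∑ i, y i ^ 2 ≤ 1 := by
    unfold euclNorm at hy
    rwa [Real.sqrt_le_one] at hy
  unfold euclNorm
  apply Real.sqrt_le_iff.mpr ⟨by positivity, ?_⟩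
  let d : ℕ → ℝ := fun r => Real.sqrt (2^r / n) * ∑ j : Fin n, uu n r j * |y j|
  have hd : ∀ r, 0 ≤ d r := fun r => mul_nonneg (Real.sqrt_nonneg _)
    (Finset.sum_nonneg fun j _ => mul_nonneg (uu_nonneg _ _ _) (abs_nonneg _))
  have hg := gram_form n N hn hN d hd
  set T := ∑ r ∈ Finset.range N, d r ^ 2 with hT
  have hT0 : 0 ≤ T := by positivity
  have hT42 : T ≤ 42 := by
    have h1 : T = ∑ i : Fin n, (∑ r ∈ Finset.range N, Real.sqrt (2^r / n) * d r * uu n r i) * |y i| := by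
      simp only [Finset.sum_mul]
      rw [Finset.sum_comm]
      refine Finset.sum_congr rfl fun r _ => ?_
      rw [sq]
      conv_lhs => rw [show d r * d r = d r * (Real.sqrt (2^r / n) * ∑ j : Fin n, uu n r j * |y j|) from rfl]
      rw [Finset.mul_sum, Finset.mul_sum]
      refine Finset.sum_congr rfl fun i _ => by ring
    have h2 := Finset.sum_mul_sq_le_sq_mul_sq Finset.univ
      (fun i : Fin n => ∑ r ∈ Finset.range N, Real.sqrt (2^r / n) * d r * uu n r i) (fun i => |y i|)
    rw [← h1] at h2
    simp only [sq_abs] at h2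
    have h3 : T ^ 2 ≤ 42 * T * 1 := h2.trans (by gcongr)
    nlinarith
  calc ∑ i, (E.mulVec y i) ^ 2
      ≤ ∑ i : Fin n, (M * ∑ r ∈ Finset.range N, Real.sqrt (2^r / n) * d r * uu n r i) ^ 2 := by
        refine Finset.sum_le_sum fun i _ => ?_
        rw [← sq_abs]
        have : |E.mulVec y i| ≤ M * ∑ r ∈ Finset.range N, Real.sqrt (2^r / n) * d r * uu n r i := by
          calc |E.mulVec y i| ≤ ∑ j : Fin n, |E i j| * |y j| := by
                simp only [Matrix.mulVec, dotProduct, ← abs_mul]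
                exact Finset.abs_sum_le_sum_abs _ _
            _ ≤ ∑ j : Fin n, (∑ r ∈ Finset.range N, α r * (uu n r i * uu n r j)) * |y j| :=
                Finset.sum_le_sum fun j _ => mul_le_mul_of_nonneg_right (hE i j) (abs_nonneg _)
            _ = ∑ r ∈ Finset.range N, α r * uu n r i * ∑ j : Fin n, uu n r j * |y j| := by
                simp only [Finset.sum_mul, Finset.mul_sum]
                rw [Finset.sum_comm]
                refine Finset.sum_congr rfl fun r _ => Finset.sum_congr rfl fun j _ => by ring
            _ ≤ ∑ r ∈ Finset.range N, (M * (2^r / n)) * uu n r i * ∑ j : Fin n, uu n r j * |y j| := by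
                refine Finset.sum_le_sum fun r hr => ?_
                have h := hα r (Finset.mem_range.mp hr)
                have h' : α r ≤ M * (2^r / n) := by
                  rw [div_le_iff₀ (by positivity)] at h
                  rw [← mul_div_assoc, le_div_iff₀ hn']; exact h
                have h3 := uu_nonneg n r i
                have h4 : 0 ≤ ∑ j : Fin n, uu n r j * |y j| :=
                  Finset.sum_nonneg fun j _ => mul_nonneg (uu_nonneg _ _ _) (abs_nonneg _)
                gcongr
            _ = _ := by
                rw [Finset.mul_sum]
                refine Finset.sum_congr rfl fun r _ => ?_
                have : (2^r / n : ℝ) = Real.sqrt (2^r / n) * Real.sqrt (2^r / n) :=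
                  (Real.mul_self_sqrt (by positivity)).symm
                conv_lhs => rw [this]
                simp only [d]; ring
        gcongr
    _ = M ^ 2 * ∑ i : Fin n, (∑ r ∈ Finset.range N, Real.sqrt (2^r / n) * d r * uu n r i) ^ 2 := by
        rw [Finset.mul_sum]; refine Finset.sum_congr rfl fun i _ => by ring
    _ ≤ M ^ 2 * (42 * 42) := by gcongr; exact hg.trans (by gcongr)
    _ = _ := by ring

lemma fro_core (n N : ℕ) (hn : 0 < n) (hN : ∀ r < N, (2:ℝ)^r ≤ n) (α : ℕ → ℝ)
    (hα : ∀ r, 0 ≤ α r) :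
    Real.sqrt (∑ i : Fin n, ∑ j : Fin n, (∑ r ∈ Finset.range N, α r * (uu n r i * uu n r j)) ^ 2) ≤
      6 * Real.sqrt (∑ r ∈ Finset.range N, ∑ q ∈ Finset.range N,
        α r * α q * ((n : ℝ) / 2 ^ (max r q)) ^ 2) := by
  have h6 : (6:ℝ) = Real.sqrt 36 := by
    rw [show (36:ℝ) = 6 ^ 2 by norm_num, Real.sqrt_sq (by norm_num)]
  rw [h6, ← Real.sqrt_mul (by norm_num)]
  apply Real.sqrt_le_sqrt
  calc _ = ∑ r ∈ Finset.range N, ∑ q ∈ Finset.range N, α r * α q * (∑ i : Fin n, uu n r i * uu n q i) ^ 2 := by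
        simp only [sq, Finset.sum_mul_sum]
        simp only [Finset.mul_sum]
        have e : ∀ i : Fin n, (∑ j : Fin n, ∑ r ∈ Finset.range N, ∑ q ∈ Finset.range N,
            α r * (uu n r i * uu n r j) * (α q * (uu n q i * uu n q j)))
            = ∑ r ∈ Finset.range N, ∑ q ∈ Finset.range N, ∑ j : Fin n,
            α r * (uu n r i * uu n r j) * (α q * (uu n q i * uu n q j)) := by
          intro i
          rw [Finset.sum_comm]
          refine Finset.sum_congr rfl fun r _ => ?_
          rw [Finset.sum_comm]
        simp only [e]
        rw [Finset.sum_comm]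
        refine Finset.sum_congr rfl fun r _ => ?_
        rw [Finset.sum_comm]
        refine Finset.sum_congr rfl fun q _ => Finset.sum_congr rfl fun i _ =>
          Finset.sum_congr rfl fun j _ => by ring
    _ ≤ ∑ r ∈ Finset.range N, ∑ q ∈ Finset.range N, α r * α q * (6 * (n / 2 ^ (max r q))) ^ 2 := by
        refine Finset.sum_le_sum fun r hr => Finset.sum_le_sum fun q hq => ?_
        have h := uu_gram n r q hn (hN r (Finset.mem_range.mp hr)) (hN q (Finset.mem_range.mp hq))
        have h0 : 0 ≤ ∑ i : Fin n, uu n r i * uu n q i :=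
          Finset.sum_nonneg fun i _ => mul_nonneg (uu_nonneg _ _ _) (uu_nonneg _ _ _)
        have := hα r; have := hα q
        gcongr
    _ = _ := by
        simp only [Finset.mul_sum]
        refine Finset.sum_congr rfl fun r _ => Finset.sum_congr rfl fun q _ => by ring

lemma minkowski {n : ℕ} (E P Q : Fin n → Fin n → ℝ) (h : ∀ i j, |E i j| ≤ P i j + Q i j) :
    Real.sqrt (∑ i, ∑ j, E i j ^ 2) ≤
      Real.sqrt (∑ i, ∑ j, P i j ^ 2) + Real.sqrt (∑ i, ∑ j, Q i j ^ 2) := by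
  have nrm : ∀ F : Fin n → Fin n → ℝ, Real.sqrt (∑ i, ∑ j, F i j ^ 2) =
      ‖(WithLp.toLp 2 (fun p : Fin n × Fin n => F p.1 p.2) : EuclideanSpace ℝ (Fin n × Fin n))‖ := by
    intro F
    rw [EuclideanSpace.norm_eq, Fintype.sum_prod_type]
    simp
  have h1 : Real.sqrt (∑ i, ∑ j, E i j ^ 2) ≤ Real.sqrt (∑ i, ∑ j, (P i j + Q i j) ^ 2) := by
    apply Real.sqrt_le_sqrt
    refine Finset.sum_le_sum fun i _ => Finset.sum_le_sum fun j _ => ?_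
    rw [← sq_abs]
    have := h i j
    gcongr
  refine h1.trans ?_
  rw [nrm, nrm, nrm]
  exact norm_add_le (WithLp.toLp 2 (fun p : Fin n × Fin n => P p.1 p.2) : EuclideanSpace ℝ (Fin n × Fin n))
    (WithLp.toLp 2 (fun p : Fin n × Fin n => Q p.1 p.2))
lemma quad (S : Finset ℝ) (a : ℝ → ℝ) (ha : ∀ x ∈ S, 0 < a x) (m : ℕ) (y b : Fin m → ℝ)
    (hy : ∀ k, y k ∈ S) (hb : ∀ k, 0 ≤ b k) (hmass : ∑ k, b k = ∑ x ∈ S, a x)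
    (f g : ℝ → ℝ) (hg : ∑ k, b k * g (y k) = ∑ x ∈ S, a x * g x) (δ : ℝ)
    (hfg : ∀ x ∈ S, |f x - g x| ≤ δ) :
    |∑ x ∈ S, a x * f x - ∑ k, b k * f (y k)| ≤ 2 * (∑ x ∈ S, a x) * δ := by
  have e : ∑ x ∈ S, a x * f x - ∑ k, b k * f (y k) =
      ∑ x ∈ S, a x * (f x - g x) - ∑ k, b k * (f (y k) - g (y k)) := by
    simp only [mul_sub, Finset.sum_sub_distrib]
    rw [hg]; ring
  have h1 : |∑ x ∈ S, a x * (f x - g x)| ≤ (∑ x ∈ S, a x) * δ := by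
    refine (Finset.abs_sum_le_sum_abs _ _).trans ?_
    rw [Finset.sum_mul]
    refine Finset.sum_le_sum fun x hx => ?_
    rw [abs_mul, abs_of_pos (ha x hx)]
    exact mul_le_mul_of_nonneg_left (hfg x hx) (ha x hx).le
  have h2 : |∑ k, b k * (f (y k) - g (y k))| ≤ (∑ x ∈ S, a x) * δ := by
    refine (Finset.abs_sum_le_sum_abs _ _).trans ?_
    rw [← hmass, Finset.sum_mul]
    refine Finset.sum_le_sum fun k _ => ?_
    rw [abs_mul, abs_of_nonneg (hb k)]
    exact mul_le_mul_of_nonneg_left (hfg _ (hy k)) (hb k)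
  rw [e]
  refine (abs_sub _ _).trans ?_
  linarith

lemma bucket_quad (S : Finset ℝ) (a : ℝ → ℝ) (ha : ∀ x ∈ S, 0 < a x) (hS : ∀ x ∈ S, x ≠ 0)
    (n R r D : ℕ) (hn : 0 < n) (l : ℝ) (hl : 2 / 3 ≤ l) (hD : 480 * l ≤ D)
    (hR : (n : ℝ) ≤ 20 * l * 2 ^ (R + 1)) :
    ∃ (m : ℕ) (y : Fin m → ℝ) (b : Fin m → ℝ), m ≤ 3 * D + 1 ∧
      (r ≤ R + 1 → (1 ≤ r → ∀ x ∈ S, 2 ^ r * l / n ≤ Real.log (1 / |x|)) →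
        (∀ x ∈ S, 0 ≤ Real.log (1 / |x|)) →
        (r ≤ R → ∀ x ∈ S, Real.log (1 / |x|) ≤ 2 ^ r * (2 * l) / n) →
      ∀ s : ℕ, s ≤ 2 * n → |∑ x ∈ S, a x * x ^ s - ∑ k, b k * y k ^ s| ≤
        2 * (∑ x ∈ S, a x) * (Real.exp (-(12 * l)) * Real.exp (-((2:ℝ) ^ r / (3 * n) * s)))) := by
  let φ : Fin D × Fin 3 → ℝ → ℝ := fun p x =>
    if p.2 = 0 then Real.log (1 / |x|) ^ (p.1 : ℕ)
    else if p.2 = 1 then (x / |x|) * Real.log (1 / |x|) ^ (p.1 : ℕ)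
    else x ^ (p.1 : ℕ)
  obtain ⟨m, y, b, hm, hy, hb, hmass, hφ⟩ := carath S a ha φ
  refine ⟨m, y, b, by simpa [mul_comm] using hm, ?_⟩
  intro hrR hlow hnn hup s hs
  have hn' : (0:ℝ) < n := by exact_mod_cast hn
  have hw : 0 ≤ ∑ x ∈ S, a x := Finset.sum_nonneg fun x hx => (ha x hx).le
  set t : ℝ := (2:ℝ)^r * s / n with ht
  have ht0 : 0 ≤ t := by positivity
  have hte : (2:ℝ) ^ r / (3 * n) * s = t / 3 := by rw [ht]; field_simp
  rw [hte, ← Real.exp_add]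
  -- linear moments
  have hlin : ∀ (q : Fin 3) (c : ℕ → ℝ), ∑ k, b k * (∑ i : Fin D, c i * φ (i, q) (y k))
      = ∑ x ∈ S, a x * (∑ i : Fin D, c i * φ (i, q) x) := by
    intro q c
    simp only [Finset.mul_sum]
    rw [Finset.sum_comm, Finset.sum_comm (s := S)]
    refine Finset.sum_congr rfl fun i _ => ?_
    have h := congrArg (fun z => c i * z) (hφ (i, q))
    simp only [Finset.mul_sum] at h
    convert h using 2 <;> ring
  -- power in terms of exp
  have habs : ∀ x ∈ S, |x| ^ s = Real.exp (-(s * Real.log (1 / |x|))) := by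
    intro x hx
    have hx0 : 0 < |x| := abs_pos.mpr (hS x hx)
    rw [one_div, Real.log_inv, mul_neg, neg_neg, Real.exp_nat_mul, Real.exp_log hx0]
  by_cases hA : r ≤ R ∧ t ≤ 24
  · obtain ⟨hr, ht24⟩ := hA
    have hδ : Real.exp (-(48 * l)) ≤ Real.exp (-(12 * l) + -(t / 3)) := by
      apply Real.exp_le_exp.mpr; linarith
    refine le_trans ?_ (mul_le_mul_of_nonneg_left hδ (by positivity))
    have htay : ∀ x ∈ S, |Real.exp (-(s * Real.log (1 / |x|)))
        - ∑ k ∈ Finset.range D, (-(s * Real.log (1 / |x|))) ^ k / (k.factorial : ℝ)|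
        ≤ Real.exp (-(48 * l)) := by
      intro x hx
      apply exp_taylor _ _ (mul_nonneg (Nat.cast_nonneg _) (hnn x hx))
      · calc (s:ℝ) * Real.log (1 / |x|) ≤ s * (2 ^ r * (2 * l) / n) := by gcongr; exact hup hr x hx
          _ = t * (2 * l) := by rw [ht]; ring
          _ ≤ 24 * (2 * l) := by gcongr
          _ = _ := by ring
      · linarith
    rcases Nat.even_or_odd s with hev | hodd
    · refine quad S a ha m y b hy hb hmass (fun x => x ^ s)
        (fun x => ∑ i : Fin D, (-(s:ℝ)) ^ (i:ℕ) / ((i:ℕ).factorial : ℝ) * φ (i, 0) x)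
        (hlin 0 (fun k => (-(s:ℝ)) ^ k / (k.factorial : ℝ))) _ ?_
      intro x hx
      simp only [φ, if_true]
      rw [← hev.pow_abs, habs x hx]
      have := htay x hx
      rw [Fin.sum_univ_eq_sum_range (fun i : ℕ => (-(s:ℝ)) ^ i / (i.factorial : ℝ) * Real.log (1 / |x|) ^ i) D]
      convert this using 4 with i _
      rw [← neg_mul, mul_pow]; ring
    · refine quad S a ha m y b hy hb hmass (fun x => x ^ s)
        (fun x => ∑ i : Fin D, (-(s:ℝ)) ^ (i:ℕ) / ((i:ℕ).factorial : ℝ) * φ (i, 1) x)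
        (hlin 1 (fun k => (-(s:ℝ)) ^ k / (k.factorial : ℝ))) _ ?_
      intro x hx
      have hx0 : |x| ≠ 0 := (abs_pos.mpr (hS x hx)).ne'
      have hσ : abs (x / |x|) = 1 := by rw [abs_div, abs_abs, div_self hx0]
      have hxs : x ^ s = (x / |x|) * |x| ^ s := by
        have h1 : x ^ s = (x / |x|) ^ s * |x| ^ s := by rw [← mul_pow, div_mul_cancel₀ _ hx0]
        have h2 : (x / |x|) ^ s = x / |x| := by
          obtain ⟨k, rfl⟩ := hodd
          have : (x / |x|) ^ 2 = 1 := by rw [← sq_abs, hσ]; norm_num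
          rw [pow_succ, pow_mul, this, one_pow, one_mul]
        rw [h1, h2]
      have hq : ∑ i : Fin D, (-(s:ℝ)) ^ (i:ℕ) / ((i:ℕ).factorial : ℝ) * φ (i, 1) x
          = (x / |x|) * ∑ k ∈ Finset.range D, (-(s * Real.log (1 / |x|))) ^ k / (k.factorial : ℝ) := by
        have h10 : ¬ ((1 : Fin 3) = 0) := by decide
        simp only [φ, if_true, h10, if_false]
        rw [Fin.sum_univ_eq_sum_range (fun i : ℕ => (-(s:ℝ)) ^ i / (i.factorial : ℝ) *
          ((x / |x|) * Real.log (1 / |x|) ^ i)) D, Finset.mul_sum]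
        refine Finset.sum_congr rfl fun i _ => ?_
        rw [← neg_mul, mul_pow]; ring
      rw [hq, hxs, ← mul_sub, abs_mul, hσ, one_mul, habs x hx]
      exact htay x hx
  by_cases hB : r = R + 1 ∧ s < D
  · refine quad S a ha m y b hy hb hmass (fun x => x ^ s) (fun x => x ^ s) ?_ _ ?_
    · have := hφ (⟨s, hB.2⟩, 2)
      simpa [φ] using this
    · intro x _; simp only [sub_self, abs_zero]; positivity
  have ht24 : 24 ≤ t := by
    by_cases hr : r ≤ R
    · by_contra h; exact hA ⟨hr, by linarith⟩
    · have hr' : r = R + 1 := by omega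
      have hs' : (D:ℝ) ≤ s := by
        have : D ≤ s := by by_contra h; exact hB ⟨hr', by omega⟩
        exact_mod_cast this
      rw [ht, le_div_iff₀ hn', hr']
      calc 24 * (n:ℝ) ≤ 24 * (20 * l * 2 ^ (R + 1)) := by gcongr
        _ = 2 ^ (R+1) * (480 * l) := by ring
        _ ≤ _ := by gcongr; linarith
  have hr1 : 1 ≤ r := by
    by_contra h
    have : r = 0 := by omega
    rw [ht, this, pow_zero, one_mul, le_div_iff₀ hn'] at ht24
    have : (s:ℝ) ≤ 2 * n := by exact_mod_cast hs
    linarith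
  refine quad S a ha m y b hy hb hmass (fun x => x ^ s) (fun _ => 0) (by simp) _ ?_
  intro x hx
  simp only [sub_zero]
  rw [abs_pow, habs x hx]
  apply Real.exp_le_exp.mpr
  have h1 : t * l ≤ s * Real.log (1 / |x|) := by
    calc t * l = s * (2 ^ r * l / n) := by rw [ht]; ring
      _ ≤ _ := by gcongr; exact hlow hr1 x hx
  nlinarith

lemma sum_buckets (X : Finset ℝ) (lam : ℝ) (hlam : 0 < lam) (n R : ℕ) (hn : 0 < n)
    (hX : ∀ x ∈ X, 0 ≤ Real.log (1 / |x|)) (f : ℝ → ℝ) :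
    ∑ x ∈ X, f x = ∑ r ∈ Finset.range (R + 2), ∑ x ∈ bucket X lam n R r, f x := by
  have hn' : (0:ℝ) < n := by exact_mod_cast hn
  have hmono : ∀ p q : ℕ, p ≤ q → (2:ℝ)^p * lam / n ≤ 2 ^ q * lam / n := by
    intro p q h
    have : (2:ℝ)^p ≤ 2^q := pow_le_pow_right₀ (by norm_num) h
    gcongr
  have hlow : ∀ r, r ∈ Finset.range (R+2) → 1 ≤ r → ∀ x ∈ bucket X lam n R r,
      2 ^ (r-1) * lam / n < Real.log (1 / |x|) := by
    intro r hr h1 x hx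
    unfold bucket at hx
    rw [if_neg (by omega)] at hx
    split_ifs at hx with h
    · exact (Finset.mem_filter.mp hx).2.1
    · have : r - 1 = R := by rw [Finset.mem_range] at hr; omega
      rw [this]; exact (Finset.mem_filter.mp hx).2
  have hup : ∀ r, r ≤ R → ∀ x ∈ bucket X lam n R r,
      Real.log (1 / |x|) ≤ 2 ^ r * lam / n := by
    intro r hr x hx
    unfold bucket at hx
    split_ifs at hx with h
    · rw [h, pow_zero, one_mul]; exact (Finset.mem_filter.mp hx).2.2
    · exact (Finset.mem_filter.mp hx).2.2
  have hdis : ∀ p ∈ Finset.range (R+2), ∀ q ∈ Finset.range (R+2), p < q →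
      Disjoint (bucket X lam n R p) (bucket X lam n R q) := by
    intro p hp q hq hpq
    rw [Finset.disjoint_left]
    intro x hx hx'
    have h1 := hlow q hq (by omega) x hx'
    rw [Finset.mem_range] at hq
    have h2 := hup p (by omega) x hx
    have h3 := hmono p (q-1) (by omega)
    linarith
  rw [← Finset.sum_biUnion]
  · congr 1
    ext x
    rw [Finset.mem_biUnion]
    constructor
    · intro hx
      by_cases h : ∃ r, r ≤ R ∧ Real.log (1 / |x|) ≤ 2 ^ r * lam / n
      · let r := Nat.find h
        have hr : r ≤ R ∧ Real.log (1 / |x|) ≤ 2 ^ r * lam / n := Nat.find_spec h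
        refine ⟨r, by rw [Finset.mem_range]; omega, ?_⟩
        unfold bucket
        split_ifs with h0
        · rw [Finset.mem_filter]
          refine ⟨hx, hX x hx, ?_⟩
          have := hr.2
          rwa [h0, pow_zero, one_mul] at this
        · rw [Finset.mem_filter]
          refine ⟨hx, ?_, hr.2⟩
          have hmin := Nat.find_min h (m := r - 1) (by show r - 1 < r; omega)
          by_contra hc
          exact hmin ⟨by omega, by linarith⟩
        · exact absurd hr.1 (by assumption)
      · push Not at h
        refine ⟨R + 1, by simp, ?_⟩
        unfold bucket
        rw [if_neg (by omega), if_neg (by omega), Finset.mem_filter]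
        exact ⟨hx, h R le_rfl⟩
    · rintro ⟨r, _, hx⟩
      unfold bucket at hx
      split_ifs at hx <;> exact (Finset.mem_filter.mp hx).1
  · intro p hp q hq hpq
    rcases lt_or_gt_of_ne hpq with h | h
    · exact hdis p (by simpa using hp) q (by simpa using hq) h
    · exact (hdis q (by simpa using hq) p (by simpa using hp) h).symm
/-- There is a Hankel matrix `Ĥ` of rank `O(ln n · ln(1/ε))` approximating
`H = V_X D_X V_Xᵀ` with spectral error `ε · max_r w_r n/2^r` and the corresponding
Frobenius error bound. -/
theorem bucket_approx_error :
    ∃ C : ℝ, 0 < C ∧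
      ∀ (n : ℕ), 2 ≤ n → ∀ ε : ℝ, 0 < ε → ε < 1 / 2 →
        ∀ lam : ℝ, lam = 2 * Real.log (1 / ε) → lam ≤ n * Real.log (10 / 9) →
          ∀ R : ℕ, R = ⌊Real.logb 2 (Real.log (10 / 9) * n / lam)⌋₊ →
            ∀ (X : Finset ℝ) (a : ℝ → ℝ),
              (∀ x ∈ X, |x| ≤ 1 ∧ x ≠ 0) → (∀ x ∈ X, 0 < a x) →
              ∀ w : ℕ → ℝ, (∀ r, w r = ∑ x ∈ bucket X lam n R r, a x) →
                ∃ Hhat : Matrix (Fin n) (Fin n) ℝ, IsHankel Hhat ∧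
                  (Hhat.rank : ℝ) ≤ C * Real.log n * Real.log (1 / ε) ∧
                  specNorm (vdvT n X a - Hhat) ≤
                    ε * ((Finset.range (R + 2)).sup'
                          (Finset.nonempty_range_iff.mpr (by omega))
                          (fun r => w r * n / 2 ^ r)) ∧
                  froNorm (vdvT n X a - Hhat) ≤
                    ε * (Real.sqrt (∑ r₁ ∈ Finset.range (R + 1), ∑ r₂ ∈ Finset.range (R + 1),
                          w r₁ * w r₂ * ((n : ℝ) / 2 ^ (max r₁ r₂)) ^ 2) + w (R + 1)) := by
  refine ⟨7000, by norm_num, ?_⟩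
  intro n hn ε hε0 hε lam hlam hlamn R hR X a hX ha w hw
  have hn0 : 0 < n := by omega
  have hn' : (0:ℝ) < n := by exact_mod_cast hn0
  set l := Real.log (1 / ε) with hl
  have hεl : Real.exp (-l) = ε := by
    rw [hl, one_div, Real.log_inv, neg_neg, Real.exp_log hε0]
  have hl2 : Real.log 2 ≤ l := by
    apply Real.log_le_log (by norm_num)
    rw [le_div_iff₀ hε0]; linarith
  have hlog2 : (2:ℝ) / 3 ≤ Real.log 2 := by have := Real.log_two_gt_d9; linarith
  have hl3 : 2 / 3 ≤ l := hlog2.trans hl2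
  have hlam0 : 0 < lam := by linarith
  have hq1 : (1:ℝ) / 10 ≤ Real.log (10 / 9) := by
    have := Real.one_sub_inv_le_log_of_pos (x := 10 / 9) (by norm_num)
    norm_num at this ⊢; linarith
  have hq2 : Real.log (10 / 9) ≤ 1 / 9 := by
    have := Real.log_le_sub_one_of_pos (x := 10 / 9) (by norm_num)
    norm_num at this ⊢; linarith
  set A := Real.log (10 / 9) * n / lam with hA
  have hA1 : 1 ≤ A := by rw [hA, le_div_iff₀ hlam0]; linarith
  have hApos : 0 < A := by linarith
  have hlogA : 0 ≤ Real.logb 2 A := Real.logb_nonneg (by norm_num) hA1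
  have hRle : (2:ℝ) ^ R ≤ A := by
    have h := Nat.floor_le hlogA
    rw [← hR, Real.le_logb_iff_rpow_le (by norm_num) hApos, Real.rpow_natCast] at h
    exact h
  have hRlt : A < (2:ℝ) ^ (R + 1) := by
    have h := Nat.lt_floor_add_one (Real.logb 2 A)
    rw [← hR, Real.logb_lt_iff_lt_rpow (by norm_num) hApos] at h
    exact_mod_cast h
  have hRn : (2:ℝ) ^ (R + 1) ≤ n := by
    rw [hA, le_div_iff₀ hlam0] at hRle
    have : (2:ℝ)^R * (4/3) ≤ 2 ^ R * lam := by gcongr; linarith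
    have : Real.log (10 / 9) * n ≤ 1 / 9 * n := by gcongr
    rw [pow_succ]; linarith
  have hRn2 : (n:ℝ) ≤ 20 * l * 2 ^ (R + 1) := by
    rw [hA, div_lt_iff₀ hlam0] at hRlt
    have : 1 / 10 * (n:ℝ) ≤ Real.log (10 / 9) * n := by gcongr
    rw [hlam] at hRlt
    linarith
  have hpow : ∀ r < R + 2, (2:ℝ)^r ≤ n := fun r hr =>
    (pow_le_pow_right₀ (by norm_num) (by omega)).trans hRn
  have hsub : ∀ r, ∀ x ∈ bucket X lam n R r, x ∈ X := by
    intro r x hx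
    unfold bucket at hx
    split_ifs at hx <;> exact (Finset.mem_filter.mp hx).1
  have hXlog : ∀ x ∈ X, 0 ≤ Real.log (1 / |x|) := by
    intro x hx
    apply Real.log_nonneg
    rw [le_div_iff₀ (abs_pos.mpr (hX x hx).2), one_mul]
    exact (hX x hx).1
  have hw0 : ∀ r, 0 ≤ w r := fun r => by
    rw [hw]; exact Finset.sum_nonneg fun x hx => (ha x (hsub r x hx)).le
  set D := ⌈480 * l⌉₊ with hDdef
  have hD1 : 480 * l ≤ D := Nat.le_ceil _
  have hD2 : (D:ℝ) < 480 * l + 1 := Nat.ceil_lt_add_one (by linarith)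
  choose m y b hm herr using fun r => bucket_quad (bucket X lam n R r) a
    (fun x hx => ha x (hsub r x hx)) (fun x hx => (hX x (hsub r x hx)).2) n R r D hn0 l hl3 hD1 hRn2
  have herr' : ∀ r < R + 2, ∀ s : ℕ, s ≤ 2 * n →
      |∑ x ∈ bucket X lam n R r, a x * x ^ s - ∑ k, b r k * y r k ^ s| ≤
        2 * w r * (Real.exp (-(12 * l)) * Real.exp (-((2:ℝ) ^ r / (3 * n) * s))) := by
    intro r hr s hs
    rw [hw]
    refine herr r (by omega) ?_ (fun x hx => hXlog x (hsub r x hx)) ?_ s hs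
    · intro h1 x hx
      have e : (2:ℝ) ^ r * l / n = 2 ^ (r - 1) * lam / n := by
        obtain ⟨q, rfl⟩ := Nat.exists_eq_add_of_le' h1
        rw [Nat.add_sub_cancel, hlam, pow_succ]; ring
      rw [e]
      unfold bucket at hx
      rw [if_neg (by omega)] at hx
      split_ifs at hx with h
      · exact (Finset.mem_filter.mp hx).2.1.le
      · have : r - 1 = R := by omega
        rw [this]; exact (Finset.mem_filter.mp hx).2.le
    · intro h1 x hx
      rw [← hlam]
      unfold bucket at hx
      split_ifs at hx with h
      · rw [h, pow_zero, one_mul]; exact (Finset.mem_filter.mp hx).2.2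
      · exact (Finset.mem_filter.mp hx).2.2
  let κ := (r : Fin (R + 2)) × Fin (m r)
  let P : Matrix (Fin n) κ ℝ := Matrix.of fun i p => b p.1 p.2 * y p.1 p.2 ^ (i : ℕ)
  let Q : Matrix κ (Fin n) ℝ := Matrix.of fun p j => y p.1 p.2 ^ (j : ℕ)
  have hH : ∀ i j, (P * Q) i j = ∑ r ∈ Finset.range (R + 2), ∑ k, b r k * y r k ^ ((i:ℕ) + (j:ℕ)) := by
    intro i j
    rw [Matrix.mul_apply, Fintype.sum_sigma]
    rw [← Fin.sum_univ_eq_sum_range (fun r => ∑ k, b r k * y r k ^ ((i:ℕ) + (j:ℕ)))]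
    refine Finset.sum_congr rfl fun r _ => Finset.sum_congr rfl fun k _ => ?_
    simp only [P, Q, Matrix.of_apply]
    rw [pow_add]; ring
  have hV : ∀ i j, vdvT n X a i j = ∑ x ∈ X, a x * x ^ ((i:ℕ) + (j:ℕ)) := by
    intro i j
    unfold vdvT vandermondeX
    rw [Matrix.mul_apply, ← Finset.sum_coe_sort X]
    refine Finset.sum_congr rfl fun x _ => ?_
    rw [Matrix.mul_diagonal]
    simp only [Matrix.of_apply, Matrix.transpose_apply]
    rw [pow_add]; ring
  set η := 2 * ε ^ 12 with hη
  have hη0 : 0 < η := by positivity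
  have hε11 : ε ^ 10 ≤ 1 / 1024 := by
    calc ε ^ 10 ≤ (1 / 2) ^ 10 := by gcongr
      _ = _ := by norm_num
  have hηε : 1024 * η ≤ 2 * ε * ε := by
    have : ε ^ 12 = ε ^ 10 * (ε * ε) := by ring
    have h2 : 0 < ε * ε := by positivity
    rw [hη, this]; nlinarith
  have hexp12 : Real.exp (-(12 * l)) = ε ^ 12 := by
    rw [← hεl, ← Real.exp_nat_mul]; congr 1; push_cast; ring
  have hE : ∀ i j : Fin n, |(vdvT n X a - P * Q) i j| ≤
      ∑ r ∈ Finset.range (R + 2), (η * w r) * (uu n r i * uu n r j) := by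
    intro i j
    rw [Matrix.sub_apply, hV, hH, sum_buckets X lam hlam0 n R hn0 hXlog, ← Finset.sum_sub_distrib]
    refine (Finset.abs_sum_le_sum_abs _ _).trans (Finset.sum_le_sum fun r hr => ?_)
    refine (herr' r (Finset.mem_range.mp hr) _ (by omega)).trans (le_of_eq ?_)
    unfold uu
    rw [hexp12, ← Real.exp_add, hη, ← neg_add, ← mul_add]
    push_cast; ring
  refine ⟨P * Q, ?_, ?_, ?_, ?_⟩
  · intro i j k l' h
    rw [hH, hH, h]
  · have h1 : (P * Q).rank ≤ (R + 2) * (3 * D + 1) := by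
      refine (Matrix.rank_mul_le_left P Q).trans ((Matrix.rank_le_card_width P).trans ?_)
      simp only [κ, Fintype.card_sigma, Fintype.card_fin]
      refine (Finset.sum_le_card_nsmul Finset.univ (fun r : Fin (R + 2) => m r) (3 * D + 1) fun r _ => hm r).trans ?_
      simp
    have h2 : ((P * Q).rank : ℝ) ≤ (R + 2) * (3 * D + 1) := by exact_mod_cast h1
    have h3 : ((R:ℝ) + 2) ≤ 9 / 2 * Real.log n := by
      have e1 : (R:ℝ) * Real.log 2 ≤ Real.log n := by
        rw [← Real.log_pow]
        exact Real.log_le_log (by positivity) (hpow R (by omega))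
      have e2 : Real.log 2 ≤ Real.log n := Real.log_le_log (by norm_num) (by exact_mod_cast hn)
      have e3 : ((R:ℝ) + 2) * (2 / 3) ≤ ((R:ℝ) + 2) * Real.log 2 := by gcongr
      linarith
    have h4 : (3 * (D:ℝ) + 1) ≤ 1446 * l := by linarith
    have h5 : 0 ≤ Real.log n := Real.log_nonneg (by exact_mod_cast hn0)
    calc ((P * Q).rank : ℝ) ≤ (R + 2) * (3 * D + 1) := h2
      _ ≤ (9 / 2 * Real.log n) * (1446 * l) := by gcongr
      _ ≤ _ := by nlinarith [mul_nonneg h5 (by linarith : 0 ≤ l)]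
  · set M := (Finset.range (R + 2)).sup' (Finset.nonempty_range_iff.mpr (by omega))
      (fun r => w r * n / 2 ^ r) with hM
    have hMr : ∀ r < R + 2, w r * n / 2 ^ r ≤ M := fun r hr =>
      Finset.le_sup' (fun r => w r * (n:ℝ) / 2 ^ r) (Finset.mem_range.mpr hr)
    have hM0 : 0 ≤ M := le_trans (by have := hw0 0; positivity) (hMr 0 (by omega))
    refine (spec_core n (R + 2) hn0 hpow _ _ hE (η * M) (by positivity) ?_).trans ?_
    · intro r hr
      calc η * w r * n / 2 ^ r = η * (w r * n / 2 ^ r) := by ring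
        _ ≤ _ := by gcongr; exact hMr r hr
    · rw [← mul_assoc]
      gcongr
      nlinarith
  · unfold froNorm
    refine (minkowski _ (fun i j => ∑ r ∈ Finset.range (R + 1), (η * w r) * (uu n r i * uu n r j))
      (fun i j => (η * w (R + 1)) * (uu n (R + 1) i * uu n (R + 1) j)) ?_).trans ?_
    · intro i j
      rw [← Finset.sum_range_succ (fun r => (η * w r) * (uu n r i * uu n r j))]
      exact hE i j
    rw [mul_add]
    apply add_le_add
    · refine (fro_core n (R + 1) hn0 (fun r hr => hpow r (by omega)) (fun r => η * w r)
        (fun r => mul_nonneg hη0.le (hw0 r))).trans ?_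
      have e : ∑ r ∈ Finset.range (R + 1), ∑ q ∈ Finset.range (R + 1),
          η * w r * (η * w q) * ((n : ℝ) / 2 ^ (max r q)) ^ 2 =
          η ^ 2 * ∑ r ∈ Finset.range (R + 1), ∑ q ∈ Finset.range (R + 1),
          w r * w q * ((n : ℝ) / 2 ^ (max r q)) ^ 2 := by
        simp only [Finset.mul_sum]
        refine Finset.sum_congr rfl fun r _ => Finset.sum_congr rfl fun q _ => by ring
      rw [e, Real.sqrt_mul (by positivity), Real.sqrt_sq hη0.le, ← mul_assoc]
      gcongr
      nlinarith
    · have hg := uu_gram n (R + 1) (R + 1) hn0 hRn hRn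
      rw [max_self] at hg
      set G := ∑ i : Fin n, uu n (R + 1) i * uu n (R + 1) i with hG
      have hG0 : 0 ≤ G := Finset.sum_nonneg fun i _ => mul_self_nonneg _
      have e : ∑ i : Fin n, ∑ j : Fin n, ((η * w (R + 1)) * (uu n (R + 1) i * uu n (R + 1) j)) ^ 2
          = (η * w (R + 1) * G) ^ 2 := by
        rw [mul_pow, sq G, hG, Finset.sum_mul_sum, Finset.mul_sum]
        simp only [Finset.mul_sum]
        refine Finset.sum_congr rfl fun r _ => Finset.sum_congr rfl fun q _ => by ring
      have hwR := hw0 (R + 1)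
      rw [e, Real.sqrt_sq (by positivity)]
      have hlε : l * ε ≤ 1 := by
        have h1 := Real.add_one_le_exp l
        have h2 : Real.exp l * ε = 1 := by rw [← hεl, ← Real.exp_add]; simp
        nlinarith
      have hnR : (n:ℝ) / 2 ^ (R + 1) ≤ 20 * l := by
        rw [div_le_iff₀ (by positivity)]; exact hRn2
      have hG2 : G ≤ 120 * l := by linarith
      have hηG : η * G ≤ ε := by
        calc η * G ≤ (2 * ε * ε / 1024) * (120 * l) := by
              gcongr; linarith
          _ = (l * ε) * (ε * (240 / 1024)) := by ring
          _ ≤ 1 * (ε * (240 / 1024)) := by gcongr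
          _ ≤ ε := by linarith
      calc η * w (R + 1) * G = (η * G) * w (R + 1) := by ring
        _ ≤ _ := by gcongr
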